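/- Let F be an invertible n×n rational matrix, set A := −FᵀF, let u be the all-ones vector, and assume (Fᵀu)_i = 2 + A_{ii} for all i. Let δ ∈ {0,1}ⁿ, set ι := u − δ, and let S ∈ ℤⁿ satisfy: (i) δ_i · ( S_i − 2 + (Au)_i − A_{ii} ) = 0 for every i; (ii) A_{ij} = 0 for all i ≠ j with δ_i = δ_j = 1; (iii) Σ_{1 ≤ i < j ≤ n} A_{ij} = n − 1. Define ℓ := (F⁻¹)ᵀ S − F ι. Then ⟨S, u⟩ − 2⟨δ, u⟩ + ⟨ℓ, ℓ⟩ − ⟨ℓ, u⟩ − 1 = ⟨−A⁻¹ S, S⟩ − ⟨S, (I + F⁻¹) u⟩ + 1. -/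

import Mathlib

open Matrix

/-- The entries of a symmetric matrix sum to its trace plus twice the sum above the diagonal. -/
theorem Matrix.IsSymm.sum_sum_eq_trace_add {n : Type*} [Fintype n] [LinearOrder n]
    {R : Type*} [CommSemiring R] {A : Matrix n n R} (hA : A.IsSymm) :
    ∑ i, ∑ j, A i j = A.trace + 2 * ∑ i, ∑ j ∈ Finset.univ.filter (fun j => i < j), A i j := by
  have hsplit : ∀ i j, A i j =
      (if i = j then A i j else 0) + (if i < j then A i j else 0) +
        (if j < i then A i j else 0) := by
    intro i j
    rcases lt_trichotomy i j with h | h | h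
    · simp [h, h.ne, h.not_gt]
    · simp [h]
    · simp [h, h.ne', h.not_gt]
  have hlower : ∑ i, ∑ j, (if j < i then A i j else 0) =
      ∑ i, ∑ j, (if i < j then A i j else 0) := by
    rw [Finset.sum_comm]
    simp only [hA.apply]
  calc ∑ i, ∑ j, A i j
      = ∑ i, ∑ j, ((if i = j then A i j else 0) + (if i < j then A i j else 0) +
        (if j < i then A i j else 0)) :=
        Finset.sum_congr rfl fun i _ => Finset.sum_congr rfl fun j _ => hsplit i j
    _ = _ := by
        simp only [Finset.sum_add_distrib, hlower, Finset.sum_filter, Matrix.trace,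
          Matrix.diag_apply, Finset.sum_ite_eq, Finset.mem_univ, if_true]
        ring

/-- The quadratic form of `A` at a `0`-`1` vector whose support is independent for `A` only
sees the diagonal of `A`. -/
theorem Matrix.dotProduct_mulVec_eq_of_indicator {n : Type*} [Fintype n]
    {R : Type*} [CommSemiring R] {A : Matrix n n R} {δ : n → R}
    (hδ : ∀ i, δ i = 0 ∨ δ i = 1)
    (hA : ∀ i j, i ≠ j → δ i = 1 → δ j = 1 → A i j = 0) :
    δ ⬝ᵥ (A *ᵥ δ) = δ ⬝ᵥ A.diag := by
  refine Finset.sum_congr rfl fun i _ => ?_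
  rcases hδ i with hi | hi
  · simp [hi]
  · rw [Matrix.mulVec, dotProduct, Finset.sum_eq_single i]
    · simp [hi]
    · intro j _ hj
      rcases hδ j with h | h
      · simp [h]
      · simp [hA i j hj.symm hi h]
    · simp

/-- With `A = −FᵀF`, `Fᵀu = 2u + diag A`, `δ ∈ {0,1}ⁿ`, `ι = u − δ`, `S ∈ ℤⁿ`
satisfying the balanced condition, no two dicritical components meeting, the dual graph
a tree, and `ℓ = (F⁻¹)ᵀS − Fι`, one has
`⟨S,u⟩ − 2⟨δ,u⟩ + ⟨ℓ,ℓ⟩ − ⟨ℓ,u⟩ − 1 = ⟨−A⁻¹S, S⟩ − ⟨S, (I + F⁻¹)u⟩ + 1`. -/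
theorem milnor_number_identity (n : ℕ) (F : Matrix (Fin n) (Fin n) ℚ) (hF : IsUnit F.det)
    (A : Matrix (Fin n) (Fin n) ℚ) (hA : A = -(Fᵀ * F))
    (hFu : ∀ i, (Fᵀ *ᵥ (fun _ => 1)) i = 2 + A i i)
    (δ : Fin n → ℚ) (hδ : ∀ i, δ i = 0 ∨ δ i = 1)
    (ι : Fin n → ℚ) (hι : ι = (fun _ => 1) - δ)
    (S : Fin n → ℚ) (hSint : ∀ i, ∃ m : ℤ, S i = m)
    (hbal : ∀ i, δ i * (S i - 2 + (A *ᵥ (fun _ => 1)) i - A i i) = 0)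
    (hdic : ∀ i j, i ≠ j → δ i = 1 → δ j = 1 → A i j = 0)
    (htree : ∑ i, ∑ j ∈ Finset.univ.filter (fun j => i < j), A i j = (n : ℚ) - 1)
    (ℓ : Fin n → ℚ) (hℓ : ℓ = (F⁻¹)ᵀ *ᵥ S - F *ᵥ ι) :
    S ⬝ᵥ (fun _ => 1) - 2 * (δ ⬝ᵥ (fun _ => 1)) + ℓ ⬝ᵥ ℓ - ℓ ⬝ᵥ (fun _ => 1) - 1 =
      ((-A⁻¹) *ᵥ S) ⬝ᵥ S - S ⬝ᵥ ((1 + F⁻¹) *ᵥ (fun _ => 1)) + 1 := by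
  set u : Fin n → ℚ := fun _ => 1
  have hsymm : A.IsSymm := by
    rw [hA]
    exact (isSymm_transpose_mul_self F).neg
  have hinv : -A⁻¹ = F⁻¹ * (F⁻¹)ᵀ := by
    have h : A⁻¹ = -(F⁻¹ * (F⁻¹)ᵀ) := by
      apply inv_eq_right_inv
      rw [hA, neg_mul_neg, Matrix.mul_assoc, ← Matrix.mul_assoc F, mul_nonsing_inv F hF,
        Matrix.one_mul, ← transpose_mul, nonsing_inv_mul F hF, transpose_one]
    rw [h, neg_neg]
  have hSS : ((F⁻¹)ᵀ *ᵥ S) ⬝ᵥ ((F⁻¹)ᵀ *ᵥ S) = ((-A⁻¹) *ᵥ S) ⬝ᵥ S := by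
    rw [hinv, ← mulVec_mulVec, dotProduct_comm (F⁻¹ *ᵥ _), dotProduct_mulVec S,
      mulVec_transpose]
  have hSι : ((F⁻¹)ᵀ *ᵥ S) ⬝ᵥ (F *ᵥ ι) = S ⬝ᵥ ι := by
    rw [mulVec_transpose, ← dotProduct_mulVec, mulVec_mulVec, nonsing_inv_mul F hF,
      one_mulVec]
  have hιι : (F *ᵥ ι) ⬝ᵥ (F *ᵥ ι) = -(ι ⬝ᵥ (A *ᵥ ι)) := by
    rw [hA, neg_mulVec, dotProduct_neg, neg_neg, ← mulVec_mulVec, dotProduct_mulVec ι,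
      vecMul_transpose]
  have hSu : ((F⁻¹)ᵀ *ᵥ S) ⬝ᵥ u = S ⬝ᵥ (F⁻¹ *ᵥ u) := by
    rw [mulVec_transpose, ← dotProduct_mulVec]
  have hιu : (F *ᵥ ι) ⬝ᵥ u = 2 * (ι ⬝ᵥ u) + ι ⬝ᵥ A.diag := by
    have h : Fᵀ *ᵥ u = (2 : ℚ) • u + A.diag := by
      ext i
      simpa [u] using hFu i
    rw [← vecMul_transpose, ← dotProduct_mulVec, h, dotProduct_add, dotProduct_smul, smul_eq_mul]
  have hδδ := dotProduct_mulVec_eq_of_indicator hδ hdic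
  have huδ : u ⬝ᵥ (A *ᵥ δ) = δ ⬝ᵥ (A *ᵥ u) := by
    rw [dotProduct_mulVec, ← mulVec_transpose, hsymm.eq, dotProduct_comm]
  have huu : u ⬝ᵥ (A *ᵥ u) = A.trace + 2 * ((n : ℚ) - 1) := by
    rw [← htree, ← hsymm.sum_sum_eq_trace_add]
    simp [u, dotProduct, mulVec]
  have hbalanced : δ ⬝ᵥ S - 2 * (δ ⬝ᵥ u) + δ ⬝ᵥ (A *ᵥ u) - δ ⬝ᵥ A.diag = 0 := by
    have h : δ ⬝ᵥ (S - (2 : ℚ) • u + A *ᵥ u - A.diag) = 0 :=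
      Finset.sum_eq_zero fun i _ => by simpa [u] using hbal i
    simpa only [dotProduct_sub, dotProduct_add, dotProduct_smul, smul_eq_mul] using h
  have hone : u ⬝ᵥ u = n := by simp [u, dotProduct]
  have htrace : u ⬝ᵥ A.diag = A.trace := by simp [u, dotProduct, trace]
  have hℓℓ : ℓ ⬝ᵥ ℓ = ((-A⁻¹) *ᵥ S) ⬝ᵥ S - 2 * (S ⬝ᵥ ι) - ι ⬝ᵥ (A *ᵥ ι) := by
    rw [hℓ, sub_dotProduct, dotProduct_sub, dotProduct_sub, dotProduct_comm (F *ᵥ ι) (_ *ᵥ S),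
      hSS, hSι, hιι]
    ring
  have hℓu : ℓ ⬝ᵥ u = S ⬝ᵥ (F⁻¹ *ᵥ u) - (2 * (ι ⬝ᵥ u) + ι ⬝ᵥ A.diag) := by
    rw [hℓ, sub_dotProduct, hSu, hιu]
  rw [hℓℓ, hℓu, hι, add_mulVec, one_mulVec, dotProduct_add]
  simp only [mulVec_sub, dotProduct_sub, sub_dotProduct, huδ, huu, hδδ, hone, htrace,
    dotProduct_comm S δ]
  linarith
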